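/- Let F ⊂ Sym²(ℝⁿ) be a Dirichlet set, X ⊂ ℝⁿ open, and u : X → ℝ locally quasiconvex. If for Lebesgue-almost every x ∈ X the function u is twice differentiable at x with Hess_x u ∈ F, then u is of type F on X. -/

import Mathlib

open Set Metric Filter MeasureTheory Asymptotics
open scoped Topology BigOperators RealInnerProductSpace

noncomputable section

abbrev Euc (n : ℕ) : Type := EuclideanSpace ℝ (Fin n)

abbrev SymMat (n : ℕ) : Type := ↥(selfAdjoint (Matrix (Fin n) (Fin n) ℝ))

/-- `u` is subaffine on `X`. -/
def SubaffineOn {n : ℕ} (X : Set (Euc n)) (u : Euc n → EReal) : Prop :=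
  ∀ K : Set (Euc n), IsCompact K → K ⊆ X →
    ∀ a : Euc n →ᵃ[ℝ] ℝ,
      (∀ x ∈ frontier K, u x ≤ (a x : EReal)) → ∀ x ∈ K, u x ≤ (a x : EReal)

/-- The Hessian matrix of `u` at `x`. -/
def hessMat {n : ℕ} (u : Euc n → ℝ) (x : Euc n) : Matrix (Fin n) (Fin n) ℝ :=
  fun i j => iteratedFDeriv ℝ 2 u x ![EuclideanSpace.single i 1, EuclideanSpace.single j 1]

structure IsDirichletSet {n : ℕ} (F : Set (SymMat n)) : Prop where
  nonempty : F.Nonempty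
  ne_univ : F ≠ Set.univ
  isClosed : IsClosed F
  add_psd : ∀ A ∈ F, ∀ P : SymMat n, (P : Matrix (Fin n) (Fin n) ℝ).PosSemidef → A + P ∈ F

/-- The Dirichlet dual `F̃ = −(∼ Int F)`. -/
def dirDual {n : ℕ} (F : Set (SymMat n)) : Set (SymMat n) := {A | -A ∉ interior F}

/-- A C² function `v` on `X` is of type `F`. -/
def IsTypeFC2 {n : ℕ} (F : Set (SymMat n)) (X : Set (Euc n)) (v : Euc n → ℝ) : Prop :=
  ContDiffOn ℝ 2 v X ∧ ∀ x ∈ X, ∃ A ∈ F, (A : Matrix (Fin n) (Fin n) ℝ) = hessMat v x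

/-- An u.s.c. function `u` is of type `F` on `X`. -/
def IsTypeF {n : ℕ} (F : Set (SymMat n)) (X : Set (Euc n)) (u : Euc n → EReal) : Prop :=
  ∀ v : Euc n → ℝ, IsTypeFC2 (dirDual F) X v → SubaffineOn X (fun x => u x + (v x : EReal))

/-- The ray set `F⃗` of `F`. -/
def raySet {n : ℕ} (F : Set (SymMat n)) : Set (SymMat n) :=
  closure {A : SymMat n | ∃ t₀ : ℝ, ∀ t : ℝ, t₀ ≤ t → t • A ∈ F}

/-- The bilinear form `⟨A v, w⟩` of a matrix. -/
def bilin {n : ℕ} (A : Matrix (Fin n) (Fin n) ℝ) (v w : Euc n) : ℝ :=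
  ∑ i, ∑ j, A i j * v i * w j

/-- `A` is not negative definite. -/
def NotNegDef {n : ℕ} (A : SymMat n) : Prop :=
  ¬ (-(A : Matrix (Fin n) (Fin n) ℝ)).PosDef

def IsLocalDefiningFn {n : ℕ} (Ω U : Set (Euc n)) (ρ : Euc n → ℝ) : Prop :=
  IsOpen U ∧ ContDiffOn ℝ (⊤ : ℕ∞) ρ U ∧ Ω ∩ U = {y ∈ U | ρ y < 0} ∧ ∀ y ∈ U, fderiv ℝ ρ y ≠ 0

def HasSmoothBoundary {n : ℕ} (Ω : Set (Euc n)) : Prop :=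
  ∀ x ∈ frontier Ω, ∃ U ρ, x ∈ U ∧ IsLocalDefiningFn Ω U ρ

/-- `∂Ω` is strictly `G`-convex at `x`. -/
def StrictlyConvexAt {n : ℕ} (G : Set (SymMat n)) (Ω : Set (Euc n)) (x : Euc n) : Prop :=
  ∃ U ρ, x ∈ U ∧ IsLocalDefiningFn Ω U ρ ∧
    ∃ B ∈ interior G, ∀ v w : Euc n, fderiv ℝ ρ x v = 0 → fderiv ℝ ρ x w = 0 →
      bilin (hessMat ρ x) v w = bilin (B : Matrix (Fin n) (Fin n) ℝ) v w

def symOne (n : ℕ) : SymMat n := ⟨1, selfAdjoint.mem_iff.mpr (IsSelfAdjoint.one _)⟩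

/-- `u` is twice differentiable at `x` with Hessian `A`. -/
def TwiceDiffWithHessAt {n : ℕ} (u : Euc n → ℝ) (x : Euc n)
    (A : Matrix (Fin n) (Fin n) ℝ) : Prop :=
  ∃ p : Euc n, (fun h : Euc n => u (x + h) - u x - ⟪p, h⟫ - 1/2 * bilin A h h)
      =o[𝓝 (0 : Euc n)] fun h => ‖h‖ ^ 2

/-!
If `A ∈ F` and `B` belongs to the dual of `F`, then `A + B` is not negative definite. Adding to `u`
a `C²` function of type `F̃` thus reduces the theorem to this: a locally semiconvex function
`w` whose Hessian is almost everywhere not negative definite is subaffine.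

If `w` fails to lie below an affine function `a` on a compact `K`, then for small `c > 0` the
function `w - a + c ‖·‖²` has an interior maximum on `K`, which is a strict maximum of
`w - a + (c / 2) ‖·‖²`. Semiconvexity and the Jensen–Słodkowski lemma make the upper contact points
of `w + (c / 2) ‖·‖²` near it a set of positive measure. At one of them `w` has a Hessian, which is
at most `-c` and hence negative definite.
-/

section StrongConvexity

variable {E : Type*} [NormedAddCommGroup E] [NormedSpace ℝ E]

lemma strongConvexOn_subset {s t : Set E} {m : ℝ} {f : E → ℝ} (hf : StrongConvexOn t m f)
    (hst : s ⊆ t) (hs : Convex ℝ s) : StrongConvexOn s m f :=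
  ⟨hs, fun _ hx _ hy => hf.2 (hst hx) (hst hy)⟩

lemma strongConvexOn_add {s : Set E} {m k : ℝ} {f g : E → ℝ} (hf : StrongConvexOn s m f)
    (hg : StrongConvexOn s k g) : StrongConvexOn s (m + k) (fun x => f x + g x) := by
  have hsum : (fun r : ℝ => (m + k) / 2 * r ^ 2) =
      (fun r => m / 2 * r ^ 2) + fun r => k / 2 * r ^ 2 := by
    ext r; simp only [Pi.add_apply]; ring
  rw [StrongConvexOn, hsum]
  exact UniformConvexOn.add hf hg

lemma strongConvexOn_of_forall_exists_le {s : Set E} (hs : Convex ℝ s) {m : ℝ} {f : E → ℝ}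
    (hf : ∀ x ∈ s, ∃ l : E →ₗ[ℝ] ℝ, ∀ y ∈ s, f x + l (y - x) + m / 2 * ‖y - x‖ ^ 2 ≤ f y) :
    StrongConvexOn s m f := by
  refine ⟨hs, fun x hx y hy a b ha hb hab => ?_⟩
  obtain ⟨l, hl⟩ := hf _ (hs hx hy ha hb hab)
  obtain rfl : a = 1 - b := by linarith
  have hxw : x - ((1 - b) • x + b • y) = b • (x - y) := by module
  have hyw : y - ((1 - b) • x + b • y) = (-(1 - b)) • (x - y) := by module
  have hx' := hl x hx
  have hy' := hl y hy
  rw [hxw, map_smul, norm_smul, mul_pow, Real.norm_eq_abs, sq_abs, smul_eq_mul] at hx'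
  rw [hyw, map_smul, norm_smul, mul_pow, Real.norm_eq_abs, sq_abs, smul_eq_mul] at hy'
  simp only [smul_eq_mul]
  linear_combination (1 - b) * hx' + b * hy'

end StrongConvexity

section SecondOrder

variable {E F : Type*} [NormedAddCommGroup E] [NormedSpace ℝ E]
  [NormedAddCommGroup F] [NormedSpace ℝ F]

lemma norm_sub_sub_fderiv_le_of_lipschitzOnWith {s : Set E} (hs : Convex ℝ s) {f : E → F}
    {K : NNReal} (hf : ∀ x ∈ s, DifferentiableAt ℝ f x) (hK : LipschitzOnWith K (fderiv ℝ f) s)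
    {x y : E} (hx : x ∈ s) (hy : y ∈ s) :
    ‖f y - f x - fderiv ℝ f x (y - x)‖ ≤ K * ‖y - x‖ ^ 2 := by
  have hseg : segment ℝ x y ⊆ s := hs.segment_subset hx hy
  have hbound : ∀ w ∈ segment ℝ x y, ‖fderiv ℝ f w - fderiv ℝ f x‖ ≤ K * ‖y - x‖ := fun w hw =>
    (hK.norm_sub_le (hseg hw) hx).trans <| by
      gcongr
      simpa only [mem_closedBall, dist_eq_norm, norm_sub_rev x y] using
        segment_subset_closedBall_left x y hw
  calc ‖f y - f x - fderiv ℝ f x (y - x)‖ ≤ K * ‖y - x‖ * ‖y - x‖ :=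
        (convex_segment x y).norm_image_sub_le_of_norm_hasFDerivWithin_le'
          (fun w hw => (hf w (hseg hw)).hasFDerivAt.hasFDerivWithinAt) hbound
          (left_mem_segment ℝ x y) (right_mem_segment ℝ x y)
    _ = K * ‖y - x‖ ^ 2 := by ring

lemma exists_ball_strongConvexOn_of_contDiffAt {f : E → ℝ} {z : E} (hf : ContDiffAt ℝ 2 f z) :
    ∃ m : ℝ, ∃ r > 0, StrongConvexOn (ball z r) m f := by
  obtain ⟨K, t, ht, hK⟩ :=
    (hf.fderiv_right (m := 1) (by norm_num)).exists_lipschitzOnWith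
  obtain ⟨r, hr, hball⟩ := Metric.mem_nhds_iff.1 (inter_mem ht (hf.eventually (by simp)))
  have hdiff : ∀ w ∈ ball z r, DifferentiableAt ℝ f w := fun w hw =>
    ContDiffAt.differentiableAt (n := 2) (hball hw).2 (by norm_num)
  refine ⟨-(2 * K), r, hr, strongConvexOn_of_forall_exists_le (convex_ball z r)
    fun x hx => ⟨(fderiv ℝ f x).toLinearMap, fun y hy => ?_⟩⟩
  have htaylor := norm_sub_sub_fderiv_le_of_lipschitzOnWith (convex_ball z r) hdiff
    (hK.mono fun w hw => (hball hw).1) hx hy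
  simp only [ContinuousLinearMap.coe_coe]
  linarith [(abs_le.1 htaylor).1]

lemma isLittleO_norm_sq_of_hasFDerivAt {f : E → F} {f' : E → E →L[ℝ] F}
    (hf : ∀ᶠ h in 𝓝 0, HasFDerivAt f (f' h) h) (hf' : f' =o[𝓝 0] fun h : E => h) :
    (fun h => f h - f 0) =o[𝓝 0] fun h : E => ‖h‖ ^ 2 := by
  refine isLittleO_iff.2 fun c hc => ?_
  obtain ⟨r, hr, hball⟩ := Metric.mem_nhds_iff.1 (inter_mem hf (isLittleO_iff.1 hf' hc))
  filter_upwards [ball_mem_nhds (0 : E) hr] with h hh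
  have hsub : closedBall (0 : E) ‖h‖ ⊆ ball 0 r := closedBall_subset_ball (by simpa using hh)
  have hbound : ∀ w ∈ closedBall (0 : E) ‖h‖, ‖f' w‖ ≤ c * ‖h‖ := fun w hw =>
    (hball (hsub hw)).2.trans (by gcongr; simpa using hw)
  calc ‖f h - f 0‖ ≤ c * ‖h‖ * ‖h - 0‖ :=
        (convex_closedBall (0 : E) ‖h‖).norm_image_sub_le_of_norm_hasFDerivWithin_le
          (fun w hw => (hball (hsub hw)).1.hasFDerivWithinAt) hbound (by simp) (by simp)
    _ = c * ‖‖h‖ ^ 2‖ := by rw [sub_zero, norm_pow, norm_norm]; ring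

theorem taylor_two_isLittleO_of_contDiffAt {f : E → F} {x : E} (hf : ContDiffAt ℝ 2 f x) :
    (fun h => f (x + h) - f x - fderiv ℝ f x h - (1 / 2 : ℝ) • fderiv ℝ (fderiv ℝ f) x h h)
      =o[𝓝 0] fun h : E => ‖h‖ ^ 2 := by
  set D := fderiv ℝ (fderiv ℝ f) x
  have hDat : HasFDerivAt (fderiv ℝ f) D x :=
    ((hf.fderiv_right (m := 1) (by norm_num)).differentiableAt (by norm_num)).hasFDerivAt
  have hsymm : IsSymmSndFDerivAt ℝ f x := hf.isSymmSndFDerivAt (by simp)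
  have hshift : Tendsto (fun h : E => x + h) (𝓝 0) (𝓝 x) :=
    Continuous.tendsto' (by fun_prop) _ _ (add_zero x)
  have hderiv : ∀ᶠ h in 𝓝 (0 : E), HasFDerivAt
      (fun h => f (x + h) - f x - fderiv ℝ f x h - (1 / 2 : ℝ) • D h h)
      (fderiv ℝ f (x + h) - fderiv ℝ f x - D h) h := by
    filter_upwards [hshift.eventually (hf.eventually (by simp))] with h hh
    have hf_add : HasFDerivAt (fun w => f (x + w)) (fderiv ℝ f (x + h)) h :=
      (hh.differentiableAt (by norm_num)).hasFDerivAt.comp h ((hasFDerivAt_id h).const_add x)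
    have hquad : HasFDerivAt (fun w => D w w) (D h + D.flip h) h :=
      D.hasFDerivAt.clm_apply (hasFDerivAt_id h)
    refine (((hf_add.sub_const (f x)).sub (fderiv ℝ f x).hasFDerivAt).sub
      (hquad.const_smul (1 / 2 : ℝ))).congr_fderiv ?_
    ext k
    have hDsymm : D h k = D k h := hsymm.eq h k
    simp only [sub_apply, smul_apply, add_apply, ContinuousLinearMap.flip_apply, hDsymm]
    module
  simpa using isLittleO_norm_sq_of_hasFDerivAt hderiv
    (hasFDerivAt_iff_isLittleO_nhds_zero.1 hDat)

end SecondOrder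

section LocallySemiconvex

/-- Local quasiconvexity in the sense of Harvey and Lawson: near each point of `X` the function is
`λ`-quasiconvex, that is, strongly convex with the possibly negative modulus `m = -λ`. Here `λ` may
vary with the point. The name avoids a clash with `QuasiconvexOn`, convexity of sublevel sets. -/
def IsLocallySemiconvexOn {E : Type*} [NormedAddCommGroup E] [NormedSpace ℝ E] (X : Set E)
    (f : E → ℝ) : Prop :=
  ∀ x ∈ X, ∃ m : ℝ, ∃ s ∈ 𝓝 x, StrongConvexOn s m f

namespace IsLocallySemiconvexOn

variable {E : Type*} [NormedAddCommGroup E]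

section NormedSpace

variable [NormedSpace ℝ E] {X : Set E} {f g : E → ℝ}

lemma add (hf : IsLocallySemiconvexOn X f) (hg : IsLocallySemiconvexOn X g) :
    IsLocallySemiconvexOn X (fun x => f x + g x) := by
  intro x hx
  obtain ⟨m, s, hs, hfs⟩ := hf x hx
  obtain ⟨k, t, ht, hgt⟩ := hg x hx
  have hst : Convex ℝ (s ∩ t) := hfs.1.inter hgt.1
  exact ⟨m + k, s ∩ t, inter_mem hs ht, strongConvexOn_add
    (strongConvexOn_subset hfs inter_subset_left hst)
    (strongConvexOn_subset hgt inter_subset_right hst)⟩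

lemma of_contDiffAt (hf : ∀ x ∈ X, ContDiffAt ℝ 2 f x) : IsLocallySemiconvexOn X f := by
  intro x hx
  obtain ⟨m, r, hr, hm⟩ := exists_ball_strongConvexOn_of_contDiffAt (hf x hx)
  exact ⟨m, ball x r, ball_mem_nhds x hr, hm⟩

end NormedSpace

variable [InnerProductSpace ℝ E] {X : Set E} {f : E → ℝ}

lemma continuousAt [FiniteDimensional ℝ E] (hf : IsLocallySemiconvexOn X f) {x : E} (hx : x ∈ X) :
    ContinuousAt f x := by
  obtain ⟨m, s, hs, hm⟩ := hf x hx
  have hconvex : ContinuousAt (fun y => f y - m / 2 * ‖y‖ ^ 2) x :=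
    (strongConvexOn_iff_convex.1 hm).continuousOn_interior.continuousAt
      (interior_mem_nhds.2 hs)
  have hquad : ContinuousAt (fun y : E => m / 2 * ‖y‖ ^ 2) x := by fun_prop
  exact (hconvex.add hquad).congr (Eventually.of_forall fun y => sub_add_cancel _ _)

end IsLocallySemiconvexOn

end LocallySemiconvex

section UpperContact

/-- The affine function with slope `p` through `(x, g x)` lies above `g` on `s`: in the terminology
of Harvey and Lawson, `x` is an upper contact point of `g` on `s`. -/
def IsUpperContact {E : Type*} [NormedAddCommGroup E] [InnerProductSpace ℝ E] (g : E → ℝ)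
    (s : Set E) (x p : E) : Prop :=
  ∀ y ∈ s, g y ≤ g x + ⟪p, y - x⟫

variable {E : Type*} [NormedAddCommGroup E] [InnerProductSpace ℝ E] {s : Set E} {g : E → ℝ}

lemma IsUpperContact.mono {t : Set E} {x p : E} (h : IsUpperContact g t x p) (hst : s ⊆ t) :
    IsUpperContact g s x p :=
  fun y hy => h y (hst hy)

lemma isUpperContact_iff_isMaxOn {x p : E} :
    IsUpperContact g s x p ↔ IsMaxOn (fun y => g y - ⟪p, y⟫) s x := by
  refine forall₂_congr fun y _ => ?_
  rw [mem_ofPred_eq, inner_sub_right]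
  constructor <;> intro h <;> linarith

-- Strong convexity along the line from `x - t • (y - x)` through `x` to `y`, with the contact
-- inequality bounding the first endpoint; then `t → 0`.
lemma IsUpperContact.le_of_strongConvexOn {m : ℝ} {x p y : E} (h : IsUpperContact g s x p)
    (hg : StrongConvexOn s m g) (hs : s ∈ 𝓝 x) (hy : y ∈ s) :
    g x + ⟪p, y - x⟫ + m / 2 * ‖y - x‖ ^ 2 ≤ g y := by
  have hreflect : Tendsto (fun t : ℝ => x - t • (y - x)) (𝓝[>] 0) (𝓝 x) :=
    tendsto_nhdsWithin_of_tendsto_nhds (Continuous.tendsto' (by fun_prop) _ _ (by simp))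
  have hlim : Tendsto (fun t : ℝ => g x + ⟪p, y - x⟫ + (1 + t) * (m / 2 * ‖y - x‖ ^ 2))
      (𝓝[>] 0) (𝓝 (g x + ⟪p, y - x⟫ + m / 2 * ‖y - x‖ ^ 2)) :=
    tendsto_nhdsWithin_of_tendsto_nhds (Continuous.tendsto' (by fun_prop) _ _ (by simp))
  refine le_of_tendsto hlim ?_
  filter_upwards [hreflect.eventually hs, self_mem_nhdsWithin] with t ht (htpos : 0 < t)
  have hcontact := h _ ht
  have hconvex := hg.2 hy ht (show 0 ≤ t / (1 + t) by positivity)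
    (show 0 ≤ 1 / (1 + t) by positivity) (by field_simp; ring)
  have hcomb : (t / (1 + t)) • y + (1 / (1 + t)) • (x - t • (y - x)) = x := by
    match_scalars <;> field_simp <;> ring
  have hnorm : ‖y - (x - t • (y - x))‖ = (1 + t) * ‖y - x‖ := by
    rw [show y - (x - t • (y - x)) = (1 + t) • (y - x) by module, norm_smul,
      Real.norm_of_nonneg (by positivity)]
  rw [sub_sub_cancel_left, inner_neg_right, inner_smul_right] at hcontact
  rw [hcomb, hnorm, smul_eq_mul, smul_eq_mul] at hconvex
  field_simp at hconvex
  refine le_of_mul_le_mul_left ?_ htpos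
  linarith

-- Test the lower bound at `x₁` and the upper bound at `x₂` against
-- `y = x₂ + r (p₁ - p₂) / ‖p₁ - p₂‖`.
lemma IsUpperContact.norm_sub_le_of_norm_sub_le {c r : ℝ} {x₁ x₂ p₁ p₂ : E}
    (h₁ : IsUpperContact g s x₁ p₁) (h₂ : IsUpperContact g s x₂ p₂) (hc : 0 ≤ c)
    (hg : StrongConvexOn s (-c) g) (hs : s ∈ 𝓝 x₁) (hr : 0 < r) (hx : ‖x₁ - x₂‖ ≤ r)
    (hball : closedBall x₂ r ⊆ s) : ‖p₁ - p₂‖ ≤ 2 * c * r := by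
  rcases eq_or_ne p₁ p₂ with rfl | hp
  · simpa using by positivity
  have hp_pos : 0 < ‖p₁ - p₂‖ := norm_pos_iff.2 (sub_ne_zero.2 hp)
  set d : E := (r / ‖p₁ - p₂‖) • (p₁ - p₂) with hd
  have hd_norm : ‖d‖ = r := by
    rw [hd, norm_smul, Real.norm_of_nonneg (by positivity)]; field_simp
  have hd_inner : ⟪p₁ - p₂, d⟫ = r * ‖p₁ - p₂‖ := by
    rw [hd, inner_smul_right, real_inner_self_eq_norm_sq]; field_simp
  have hy : x₂ + d ∈ s := hball (by simp [hd_norm])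
  have hlower := h₁.le_of_strongConvexOn hg hs hy
  have hupper := h₂ _ hy
  have hx₂ := h₁ x₂ (hball (mem_closedBall_self hr.le))
  have hdist : ‖x₂ + d - x₁‖ ≤ 2 * r := by
    rw [add_sub_right_comm]
    linarith [norm_add_le (x₂ - x₁) d, norm_sub_rev x₁ x₂]
  have hquad : c / 2 * ‖x₂ + d - x₁‖ ^ 2 ≤ c / 2 * (2 * r) ^ 2 := by gcongr
  rw [add_sub_right_comm, inner_add_right, ← add_sub_right_comm] at hlower
  rw [add_sub_cancel_left] at hupper
  rw [inner_sub_left] at hd_inner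
  refine le_of_mul_le_mul_left ?_ hr
  linarith

lemma IsUpperContact.norm_sub_le {c δ : ℝ} {x₁ x₂ p₁ p₂ : E}
    (h₁ : IsUpperContact g s x₁ p₁) (h₂ : IsUpperContact g s x₂ p₂) (hc : 0 ≤ c)
    (hg : StrongConvexOn s (-c) g) (hs : s ∈ 𝓝 x₁) (hx : ‖x₁ - x₂‖ < δ)
    (hball : ball x₂ δ ⊆ s) : ‖p₁ - p₂‖ ≤ 2 * c * ‖x₁ - x₂‖ := by
  have hlim : Tendsto (fun r : ℝ => 2 * c * r) (𝓝[>] ‖x₁ - x₂‖) (𝓝 (2 * c * ‖x₁ - x₂‖)) :=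
    tendsto_nhdsWithin_of_tendsto_nhds (Continuous.tendsto (by fun_prop) _)
  refine ge_of_tendsto hlim ?_
  filter_upwards [Ioo_mem_nhdsGT hx] with r hr
  exact h₁.norm_sub_le_of_norm_sub_le h₂ hc hg hs ((norm_nonneg _).trans_lt hr.1) hr.1.le
    ((closedBall_subset_ball hr.2).trans hball)

lemma isUpperContact_add_sq_iff {c : ℝ} {z q : E} :
    IsUpperContact (fun y => g y + c * ‖y‖ ^ 2) s z q ↔
      ∀ y ∈ s, g y ≤ g z + ⟪q - (2 * c) • z, y - z⟫ - c * ‖y - z‖ ^ 2 := by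
  refine forall₂_congr fun y _ => ?_
  have hy : ‖y‖ ^ 2 = ‖z‖ ^ 2 + 2 * ⟪z, y - z⟫ + ‖y - z‖ ^ 2 := by
    rw [← norm_add_sq_real, add_sub_cancel]
  beta_reduce
  rw [hy, inner_sub_left, real_inner_smul_left]
  constructor <;> intro h <;> linarith

-- Outside the ball of radius `r` the strict contact at `z` beats the tilt by `p`, so a maximum of
-- the tilted function over that ball is a maximum over `s`.
lemma exists_mem_closedBall_isUpperContact [FiniteDimensional ℝ E] {c r : ℝ} {z q p : E}
    (hz : IsUpperContact (fun y => g y + c * ‖y‖ ^ 2) s z q) (hc : 0 < c) (hr : 0 ≤ r)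
    (hcont : UpperSemicontinuousOn g (closedBall z r))
    (hp : ‖p - (q - (2 * c) • z)‖ ≤ c * r) : ∃ x ∈ closedBall z r, IsUpperContact g s x p := by
  rw [isUpperContact_add_sq_iff] at hz
  have hz_mem : z ∈ closedBall z r := mem_closedBall_self hr
  have hlin : ContinuousOn (fun y => -⟪p, y⟫) (closedBall z r) := by fun_prop
  obtain ⟨x, hx, hxmax⟩ := (hcont.add hlin.upperSemicontinuousOn).exists_isMaxOn ⟨z, hz_mem⟩
    (isCompact_closedBall z r)
  refine ⟨x, hx, isUpperContact_iff_isMaxOn.2 fun y hy => ?_⟩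
  rw [mem_ofPred_eq]
  by_cases hyr : y ∈ closedBall z r
  · have hyx : g y + -⟪p, y⟫ ≤ g x + -⟪p, x⟫ := hxmax hyr
    linarith
  · have hzx : g z + -⟪p, z⟫ ≤ g x + -⟪p, x⟫ := hxmax hz_mem
    have hyz := hz y hy
    rw [mem_closedBall, not_le, dist_eq_norm] at hyr
    have htilt : ⟪q - (2 * c) • z, y - z⟫ - ⟪p, y - z⟫ ≤ c * ‖y - z‖ ^ 2 :=
      calc ⟪q - (2 * c) • z, y - z⟫ - ⟪p, y - z⟫
          ≤ ‖p - (q - (2 * c) • z)‖ * ‖y - z‖ := by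
            rw [← inner_sub_left, norm_sub_rev]; exact real_inner_le_norm _ _
        _ ≤ c * ‖y - z‖ * ‖y - z‖ := by gcongr; exact hp.trans (by gcongr)
        _ = c * ‖y - z‖ ^ 2 := by ring
    rw [inner_sub_right p] at htilt
    linarith

end UpperContact

section ContactMeasure

variable {E : Type*} [NormedAddCommGroup E] [MeasurableSpace E] [BorelSpace E]

lemma addHaar_image_eq_zero_of_lipschitzOnWith [NormedSpace ℝ E] [FiniteDimensional ℝ E]
    (μ : Measure E) [μ.IsAddHaarMeasure] {t : Set E} (ht : μ t = 0) {G : E → E} {K : NNReal}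
    (hG : LipschitzOnWith K G t) : μ (G '' t) = 0 := by
  have hHaus : μH[Module.finrank ℝ E] t = 0 :=
    Measure.absolutelyContinuous_isAddHaarMeasure μH[Module.finrank ℝ E] μ ht
  refine Measure.absolutelyContinuous_isAddHaarMeasure μ μH[Module.finrank ℝ E] ?_
  simpa [hHaus] using hG.hausdorffMeasure_image_le (Nat.cast_nonneg (Module.finrank ℝ E))

lemma addHaar_setOf_exists_rel_eq_zero [NormedSpace ℝ E] [FiniteDimensional ℝ E]
    (μ : Measure E) [μ.IsAddHaarMeasure] {t : Set E} (ht : μ t = 0) {r : E → E → Prop} {K : NNReal}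
    (hr : ∀ x₁ ∈ t, ∀ x₂ ∈ t, ∀ p₁ p₂, r x₁ p₁ → r x₂ p₂ → ‖p₁ - p₂‖ ≤ K * ‖x₁ - x₂‖) :
    μ {p | ∃ x ∈ t, r x p} = 0 := by
  have hdom : ∀ x ∈ {x ∈ t | ∃ p, r x p}, ∃ p, r x p := fun x hx => hx.2
  choose! G hG using hdom
  have hlip : LipschitzOnWith K G {x ∈ t | ∃ p, r x p} :=
    LipschitzOnWith.of_dist_le_mul fun x₁ hx₁ x₂ hx₂ => by
      simpa only [dist_eq_norm] using hr x₁ hx₁.1 x₂ hx₂.1 _ _ (hG x₁ hx₁) (hG x₂ hx₂)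
  refine measure_mono_null ?_
    (addHaar_image_eq_zero_of_lipschitzOnWith μ (measure_mono_null (sep_subset _ _) ht) hlip)
  rintro p ⟨x, hx, hxp⟩
  refine ⟨x, ⟨hx, p, hxp⟩, ?_⟩
  simpa [sub_eq_zero] using hr x hx x hx _ _ (hG x ⟨hx, p, hxp⟩) hxp

variable [InnerProductSpace ℝ E] [FiniteDimensional ℝ E]

-- The Jensen–Słodkowski lemma. The slope is a Lipschitz function of the contact point, and the
-- slopes fill a ball, which would be null if the contact set were.
theorem addHaar_upperContact_ne_zero (μ : Measure E) [μ.IsAddHaarMeasure] {s : Set E} {g : E → ℝ}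
    {m c : ℝ} {z q : E} (hg : StrongConvexOn s m g) (hs : s ∈ 𝓝 z) (hc : 0 < c)
    (hz : IsUpperContact (fun y => g y + c * ‖y‖ ^ 2) s z q) :
    μ {x ∈ interior s | ∃ p, IsUpperContact g s x p} ≠ 0 := by
  obtain ⟨R, hR, hball⟩ := Metric.mem_nhds_iff.1 (interior_mem_nhds.2 hs)
  set r := R / 4 with hr
  have hr_pos : 0 < r := by positivity
  have hsub : closedBall z r ⊆ interior s :=
    (closedBall_subset_ball (by linarith)).trans hball
  intro hnull
  have hslope : ∀ x₁ ∈ closedBall z r, ∀ x₂ ∈ closedBall z r, ∀ p₁ p₂,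
      IsUpperContact g s x₁ p₁ → IsUpperContact g s x₂ p₂ → ‖p₁ - p₂‖ ≤ 2 * |m| * ‖x₁ - x₂‖ := by
    intro x₁ hx₁ x₂ hx₂ p₁ p₂ hp₁ hp₂
    refine hp₁.norm_sub_le hp₂ (abs_nonneg m) (hg.mono (neg_abs_le m))
      (mem_interior_iff_mem_nhds.1 (hsub hx₁)) (δ := 3 * r) ?_
      ((ball_subset_ball' ?_).trans (hball.trans interior_subset))
    · rw [← dist_eq_norm]
      linarith [dist_triangle_right x₁ x₂ z, mem_closedBall.1 hx₁, mem_closedBall.1 hx₂]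
    · linarith [mem_closedBall.1 hx₂]
  have hcont : ContinuousOn g (closedBall z r) := fun x hx =>
    (IsLocallySemiconvexOn.continuousAt (X := interior s)
      (fun y hy => ⟨m, s, mem_interior_iff_mem_nhds.1 hy, hg⟩) (hsub hx)).continuousWithinAt
  have hfill : ball (q - (2 * c) • z) (c * r) ⊆
      {p | ∃ x ∈ {x ∈ closedBall z r | ∃ p, IsUpperContact g s x p}, IsUpperContact g s x p} := by
    intro p hp
    obtain ⟨x, hx, hxp⟩ := exists_mem_closedBall_isUpperContact hz hc hr_pos.le
      hcont.upperSemicontinuousOn (mem_ball_iff_norm.1 hp).le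
    exact ⟨x, ⟨hx, p, hxp⟩, hxp⟩
  refine (measure_ball_pos μ _ (by positivity)).ne' (measure_mono_null hfill ?_)
  have ht : {x ∈ closedBall z r | ∃ p, IsUpperContact g s x p} ⊆
      {x ∈ interior s | ∃ p, IsUpperContact g s x p} := fun x hx => ⟨hsub hx.1, hx.2⟩
  exact addHaar_setOf_exists_rel_eq_zero μ (K := 2 * Real.nnabs m) (measure_mono_null ht hnull)
    fun x₁ hx₁ x₂ hx₂ p₁ p₂ => by simpa using hslope x₁ hx₁.1 x₂ hx₂.1 p₁ p₂

end ContactMeasure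

section Hessian

open scoped Matrix

variable {n : ℕ}

lemma bilin_self_eq_dotProduct (A : Matrix (Fin n) (Fin n) ℝ) (h : Euc n) :
    bilin A h h = h.ofLp ⬝ᵥ A *ᵥ h.ofLp := by
  simp only [bilin, dotProduct, Matrix.mulVec, Finset.mul_sum]
  exact Finset.sum_congr rfl fun i _ => Finset.sum_congr rfl fun j _ => by ring

lemma bilin_add (A B : Matrix (Fin n) (Fin n) ℝ) (v w : Euc n) :
    bilin (A + B) v w = bilin A v w + bilin B v w := by
  simp only [bilin, Matrix.add_apply, add_mul, Finset.sum_add_distrib]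

lemma bilin_neg (A : Matrix (Fin n) (Fin n) ℝ) (v w : Euc n) :
    bilin (-A) v w = -bilin A v w := by
  simp only [bilin, Matrix.neg_apply, neg_mul, Finset.sum_neg_distrib]

lemma bilin_smul_smul (A : Matrix (Fin n) (Fin n) ℝ) (s t : ℝ) (v w : Euc n) :
    bilin A (s • v) (t • w) = s * t * bilin A v w := by
  simp only [bilin, PiLp.smul_apply, smul_eq_mul, Finset.mul_sum]
  exact Finset.sum_congr rfl fun i _ => Finset.sum_congr rfl fun j _ => by ring

lemma bilin_hessMat (f : Euc n → ℝ) (x v w : Euc n) :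
    bilin (hessMat f x) v w = fderiv ℝ (fderiv ℝ f) x v w := by
  have expand : ∀ v : Euc n, v = ∑ i, v i • (EuclideanSpace.single i (1 : ℝ) : Euc n) :=
    fun v => by ext j; simp [Pi.single_apply]
  conv_rhs => rw [expand v, expand w]
  simp only [bilin, hessMat, iteratedFDeriv_two_apply, map_sum, map_smul, sum_apply,
    smul_apply, smul_eq_mul, Finset.mul_sum, Matrix.cons_val_zero, Matrix.cons_val_one]
  rw [Finset.sum_comm]
  exact Finset.sum_congr rfl fun i _ => Finset.sum_congr rfl fun j _ => by ring

lemma posDef_iff_forall_bilin_pos {A : SymMat n} :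
    (A : Matrix (Fin n) (Fin n) ℝ).PosDef ↔
      ∀ h : Euc n, h ≠ 0 → 0 < bilin (A : Matrix (Fin n) (Fin n) ℝ) h h := by
  rw [Matrix.posDef_iff_dotProduct_mulVec, and_iff_right
    (show (A : Matrix (Fin n) (Fin n) ℝ).IsHermitian from A.2)]
  refine ⟨fun hA h hh => ?_, fun hA x hx => ?_⟩
  · simpa [bilin_self_eq_dotProduct] using hA (x := h.ofLp) (by simpa using hh)
  · simpa [bilin_self_eq_dotProduct] using hA (WithLp.toLp 2 x) (by simpa using hx)

lemma posDef_iff_forall_mem_sphere_bilin_pos {A : SymMat n} :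
    (A : Matrix (Fin n) (Fin n) ℝ).PosDef ↔
      ∀ h ∈ sphere (0 : Euc n) 1, 0 < bilin (A : Matrix (Fin n) (Fin n) ℝ) h h := by
  rw [posDef_iff_forall_bilin_pos]
  refine ⟨fun hA h hh => hA h (ne_of_mem_sphere hh one_ne_zero), fun hA h hh => ?_⟩
  have hunit : ‖h‖⁻¹ • h ∈ sphere (0 : Euc n) 1 := by
    simpa using norm_smul_inv_norm (𝕜 := ℝ) hh
  have hpos := hA _ hunit
  rw [bilin_smul_smul] at hpos
  exact pos_of_mul_pos_right hpos (by positivity)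

lemma isOpen_setOf_posDef : IsOpen {A : SymMat n | (A : Matrix (Fin n) (Fin n) ℝ).PosDef} := by
  have hcont : Continuous fun q : SymMat n × Euc n =>
      bilin (q.1 : Matrix (Fin n) (Fin n) ℝ) q.2 q.2 := by
    have hentry : ∀ i j, Continuous fun q : SymMat n × Euc n =>
        (q.1 : Matrix (Fin n) (Fin n) ℝ) i j := fun i j =>
      (continuous_subtype_val.comp continuous_fst).matrix_elem i j
    have hcoord : ∀ i, Continuous fun q : SymMat n × Euc n => q.2 i := fun i => by fun_prop
    exact continuous_finsetSum _ fun i _ => continuous_finsetSum _ fun j _ =>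
      ((hentry i j).mul (hcoord i)).mul (hcoord j)
  simp only [posDef_iff_forall_mem_sphere_bilin_pos]
  refine isOpen_iff_mem_nhds.2 fun A hA => ?_
  exact (isCompact_sphere (0 : Euc n) 1).eventually_forall_of_forall_eventually fun h hh =>
    (isOpen_Ioi.preimage hcont).mem_nhds (hA h hh)

-- If `-(A + B)` were positive definite, `-B` would have the open neighbourhood
-- `{C | C - A > 0} ⊆ F`.
lemma notNegDef_add {F : Set (SymMat n)}
    (hF : ∀ A ∈ F, ∀ P : SymMat n, (P : Matrix (Fin n) (Fin n) ℝ).PosSemidef → A + P ∈ F)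
    {A B : SymMat n} (hA : A ∈ F) (hB : B ∈ dirDual F) : NotNegDef (A + B) := by
  intro hpos
  refine hB (mem_interior.2 ⟨{C | ((C - A : SymMat n) : Matrix (Fin n) (Fin n) ℝ).PosDef},
    fun C hC => ?_, isOpen_setOf_posDef.preimage (continuous_id.sub continuous_const), ?_⟩)
  · simpa using hF A hA (C - A) (Matrix.PosDef.posSemidef hC)
  · change ((-B - A : SymMat n) : Matrix (Fin n) (Fin n) ℝ).PosDef
    rwa [← neg_add', add_comm B A]

namespace TwiceDiffWithHessAt

variable {f g : Euc n → ℝ} {x : Euc n} {A B : Matrix (Fin n) (Fin n) ℝ}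

lemma add (hf : TwiceDiffWithHessAt f x A) (hg : TwiceDiffWithHessAt g x B) :
    TwiceDiffWithHessAt (fun y => f y + g y) x (A + B) := by
  obtain ⟨p, hp⟩ := hf
  obtain ⟨q, hq⟩ := hg
  refine ⟨p + q, (hp.add hq).congr_left fun h => ?_⟩
  rw [inner_add_left, bilin_add]
  ring

lemma of_contDiffAt (hf : ContDiffAt ℝ 2 f x) : TwiceDiffWithHessAt f x (hessMat f x) := by
  refine ⟨(InnerProductSpace.toDual ℝ (Euc n)).symm (fderiv ℝ f x), ?_⟩
  simpa only [InnerProductSpace.toDual_symm_apply, bilin_hessMat, smul_eq_mul] using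
    taylor_two_isLittleO_of_contDiffAt hf

lemma tendsto_symmetric_diff_quotient (hf : TwiceDiffWithHessAt f x A) (h : Euc n) :
    Tendsto (fun t : ℝ => (f (x + t • h) + f (x - t • h) - 2 * f x) / t ^ 2) (𝓝[≠] 0)
      (𝓝 (bilin A h h)) := by
  obtain ⟨p, hp⟩ := hf
  have hscale : ∀ v : Euc n, (fun t : ℝ => f (x + t • v) - f x - ⟪p, t • v⟫
      - 1 / 2 * bilin A (t • v) (t • v)) =o[𝓝[≠] 0] fun t => t ^ 2 := fun v => by
    have hv : Tendsto (fun t : ℝ => t • v) (𝓝[≠] 0) (𝓝 0) :=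
      tendsto_nhdsWithin_of_tendsto_nhds (Continuous.tendsto' (by fun_prop) _ _ (zero_smul ℝ v))
    refine (hp.comp_tendsto hv).trans_isBigO (IsBigO.of_bound (‖v‖ ^ 2) ?_)
    exact Eventually.of_forall fun t => by simp [norm_smul, mul_pow, mul_comm]
  have hlim := ((hscale h).add (hscale (-h))).tendsto_div_nhds_zero.add_const (bilin A h h)
  rw [zero_add] at hlim
  refine hlim.congr' ?_
  filter_upwards [self_mem_nhdsWithin] with t (ht : t ≠ 0)
  rw [smul_neg, ← neg_smul, bilin_smul_smul, bilin_smul_smul, inner_smul_right, inner_smul_right,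
    neg_smul, ← sub_eq_add_neg]
  field_simp
  ring

lemma bilin_le_of_isUpperContact_add_sq (hf : TwiceDiffWithHessAt f x A) {s : Set (Euc n)}
    {c : ℝ} {p : Euc n} (hs : s ∈ 𝓝 x)
    (hp : IsUpperContact (fun y => f y + c * ‖y‖ ^ 2) s x p) (h : Euc n) :
    bilin A h h ≤ -(2 * c) * ‖h‖ ^ 2 := by
  rw [isUpperContact_add_sq_iff] at hp
  have hplus : Tendsto (fun t : ℝ => x + t • h) (𝓝[≠] 0) (𝓝 x) :=
    tendsto_nhdsWithin_of_tendsto_nhds (Continuous.tendsto' (by fun_prop) _ _ (by simp))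
  have hminus : Tendsto (fun t : ℝ => x - t • h) (𝓝[≠] 0) (𝓝 x) :=
    tendsto_nhdsWithin_of_tendsto_nhds (Continuous.tendsto' (by fun_prop) _ _ (by simp))
  refine le_of_tendsto (hf.tendsto_symmetric_diff_quotient h) ?_
  filter_upwards [hplus.eventually hs, hminus.eventually hs, self_mem_nhdsWithin]
    with t htplus htminus (ht : t ≠ 0)
  have hle_plus := hp _ htplus
  have hle_minus := hp _ htminus
  rw [add_sub_cancel_left, norm_smul, mul_pow, Real.norm_eq_abs, sq_abs] at hle_plus
  rw [sub_sub_cancel_left, norm_neg, inner_neg_right, norm_smul, mul_pow, Real.norm_eq_abs,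
    sq_abs] at hle_minus
  rw [div_le_iff₀ (by positivity)]
  linarith

end TwiceDiffWithHessAt

end Hessian

section Subaffine

-- The small quadratic term is dominated on `K` by the failure `w x₀ - a x₀`, so the maximum of
-- `w - a + c ‖·‖²` over `K` is attained off the frontier.
lemma exists_mem_interior_isUpperContact_add_sq {E : Type*} [NormedAddCommGroup E]
    [InnerProductSpace ℝ E] [FiniteDimensional ℝ E] {K : Set E} (hK : IsCompact K) {w : E → ℝ}
    (hw : UpperSemicontinuousOn w K) {a : E →ᵃ[ℝ] ℝ} (hfront : ∀ x ∈ frontier K, w x ≤ a x)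
    {x₀ : E} (hx₀ : x₀ ∈ K) (hlt : a x₀ < w x₀) :
    ∃ z ∈ interior K, ∃ c > 0, ∃ q, IsUpperContact (fun y => w y + c * ‖y‖ ^ 2) K z q := by
  obtain ⟨C, hC⟩ := hK.isBounded.exists_norm_le
  set c := (w x₀ - a x₀) / (C ^ 2 + 1)
  have hc_pos : 0 < c := div_pos (sub_pos.2 hlt) (by positivity)
  have hc_mul : c * (C ^ 2 + 1) = w x₀ - a x₀ := div_mul_cancel₀ _ (by positivity)
  have hpert : ContinuousOn (fun y => c * ‖y‖ ^ 2 - a y) K := by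
    have := a.continuous_of_finiteDimensional
    fun_prop
  obtain ⟨z, hz, hzmax⟩ := (hw.add hpert.upperSemicontinuousOn).exists_isMaxOn ⟨x₀, hx₀⟩ hK
  have hmax : ∀ y ∈ K, w y + (c * ‖y‖ ^ 2 - a y) ≤ w z + (c * ‖z‖ ^ 2 - a z) := hzmax
  have hz_norm : c * ‖z‖ ^ 2 ≤ c * C ^ 2 := by gcongr; exact hC z hz
  have hz_lt : a z < w z := by
    have := hmax x₀ hx₀
    have : 0 ≤ c * ‖x₀‖ ^ 2 := by positivity
    linarith
  have hz_int : z ∈ interior K := by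
    by_contra hz'
    exact (hfront z ⟨subset_closure hz, hz'⟩).not_gt hz_lt
  refine ⟨z, hz_int, c, hc_pos,
    (InnerProductSpace.toDual ℝ E).symm (LinearMap.toContinuousLinearMap a.linear),
    fun y hy => ?_⟩
  have ha : a.linear (y - z) = a y - a z := by simpa using a.linearMap_vsub y z
  rw [InnerProductSpace.toDual_symm_apply, LinearMap.coe_toContinuousLinearMap', ha]
  linarith [hmax y hy]

theorem subaffineOn_of_ae_notNegDef {n : ℕ} {X : Set (Euc n)} {w : Euc n → ℝ}
    (hw : IsLocallySemiconvexOn X w)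
    (hae : ∀ᵐ x ∂(volume : Measure (Euc n)), x ∈ X →
      ∃ A : SymMat n, NotNegDef A ∧ TwiceDiffWithHessAt w x (A : Matrix (Fin n) (Fin n) ℝ)) :
    SubaffineOn X (fun x => (w x : EReal)) := by
  intro K hK hKX a hfront x₀ hx₀
  simp only [EReal.coe_le_coe_iff] at hfront ⊢
  by_contra! hlt
  have hcont : ContinuousOn w K := fun x hx => (hw.continuousAt (hKX hx)).continuousWithinAt
  obtain ⟨z, hz, c, hc, q, hq⟩ :=
    exists_mem_interior_isUpperContact_add_sq hK hcont.upperSemicontinuousOn hfront hx₀ hlt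
  have hsplit : (fun y => w y + c * ‖y‖ ^ 2) =
      fun y => (w y + c / 2 * ‖y‖ ^ 2) + c / 2 * ‖y‖ ^ 2 := by
    ext y; ring
  have hpert : IsLocallySemiconvexOn X fun y => w y + c / 2 * ‖y‖ ^ 2 :=
    hw.add (.of_contDiffAt fun x _ => contDiffAt_const.mul (contDiff_norm_sq ℝ).contDiffAt)
  obtain ⟨m, s, hs, hm⟩ := hpert z (hKX (interior_subset hz))
  obtain ⟨R, hR, hball⟩ := Metric.mem_nhds_iff.1 (inter_mem hs (mem_interior_iff_mem_nhds.1 hz))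
  have hpos := addHaar_upperContact_ne_zero volume
    (strongConvexOn_subset hm (fun y hy => (hball hy).1) (convex_ball z R))
    (ball_mem_nhds z hR) (half_pos hc) (hsplit ▸ hq.mono fun y hy => (hball hy).2)
  rw [isOpen_ball.interior_eq] at hpos
  obtain ⟨x, ⟨hx, p, hp⟩, hxA⟩ := ((frequently_ae_mem_iff.2 hpos).and_eventually hae).exists
  obtain ⟨A, hA, hwA⟩ := hxA (hKX (hball hx).2)
  refine hA (posDef_iff_forall_bilin_pos (A := -A).2 fun h hh => ?_)
  have hle := hwA.bilin_le_of_isUpperContact_add_sq (isOpen_ball.mem_nhds hx) hp h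
  have hh_pos : 0 < c * ‖h‖ ^ 2 := by positivity
  rw [NegMemClass.coe_neg, bilin_neg]
  linarith

end Subaffine

theorem quasiconvex_ae_typeF_general {n : ℕ} {F : Set (SymMat n)}
    (hF : ∀ A ∈ F, ∀ P : SymMat n, (P : Matrix (Fin n) (Fin n) ℝ).PosSemidef → A + P ∈ F)
    {X : Set (Euc n)} (hX : IsOpen X) {u : Euc n → ℝ} (hu : IsLocallySemiconvexOn X u)
    (hae : ∀ᵐ x ∂(volume : Measure (Euc n)), x ∈ X →
      ∃ A ∈ F, TwiceDiffWithHessAt u x (A : Matrix (Fin n) (Fin n) ℝ)) :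
    IsTypeF F X (fun x => (u x : EReal)) := by
  rintro v ⟨hv, hvB⟩
  have hvAt : ∀ x ∈ X, ContDiffAt ℝ 2 v x := fun x hx => hv.contDiffAt (hX.mem_nhds hx)
  simp only [← EReal.coe_add]
  refine subaffineOn_of_ae_notNegDef (hu.add (.of_contDiffAt hvAt)) ?_
  filter_upwards [hae] with x hxA hx
  obtain ⟨A, hA, huA⟩ := hxA hx
  obtain ⟨B, hB, hBv⟩ := hvB x hx
  exact ⟨A + B, notNegDef_add hF hA hB,
    huA.add (hBv ▸ TwiceDiffWithHessAt.of_contDiffAt (hvAt x hx))⟩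

/-- Corollary 7.5: a locally quasiconvex function whose Hessian lies
in `F` almost everywhere is of type `F`. -/
theorem quasiconvex_ae_typeF {n : ℕ} (F : Set (SymMat n)) (hF : IsDirichletSet F)
    (X : Set (Euc n)) (hX : IsOpen X) (u : Euc n → ℝ) (lam : ℝ) (hlam : 0 < lam)
    (hq : ∀ x ∈ X, ∃ B, IsOpen B ∧ Convex ℝ B ∧ x ∈ B ∧ B ⊆ X ∧
        ConvexOn ℝ B (fun y => u y + lam * (1/2 * ‖y‖ ^ 2)))
    (hae : ∀ᵐ x ∂(volume : Measure (Euc n)), x ∈ X →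
        ∃ A ∈ F, TwiceDiffWithHessAt u x (A : Matrix (Fin n) (Fin n) ℝ)) :
    IsTypeF F X (fun x => (u x : EReal)) := by
  refine quasiconvex_ae_typeF_general hF.add_psd hX (fun x hx => ?_) hae
  obtain ⟨B, hB, -, hxB, -, hconvex⟩ := hq x hx
  exact ⟨-lam, B, hB.mem_nhds hxB,
    strongConvexOn_iff_convex.2 (hconvex.congr fun y _ => by ring)⟩
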